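/- On-shell nilpotency of the Yang–Mills BRST operator: the BRST derivation d of the Yang–Mills jet algebra maps the Klein–Gordon ideal I_KG into itself, and d(d(X_{(f,γ)})) ∈ I_KG for every field index f and every multi-index γ; in particular d² vanishes on the generators modulo the equations of motion. -/

import Mathlib

open MvPolynomial

/-- Spacetime multi-indices on 4-dimensional spacetime. -/
abbrev MIdx : Type := Fin 4 →₀ ℕ

/-- The Yang–Mills field index set: the four summands label the vector fields `A^μ_a`,
the ghosts `u_a`, the antighosts `ũ_a` and the scalars `Φ_a`. -/
abbrev YMIdx (r : ℕ) : Type := (Fin r × Fin 4) ⊕ (Fin r ⊕ (Fin r ⊕ Fin r))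

/-- The colour of a Yang–Mills field. -/
def colour {r : ℕ} : YMIdx r → Fin r
  | Sum.inl (a, _) => a
  | Sum.inr (Sum.inl a) => a
  | Sum.inr (Sum.inr (Sum.inl a)) => a
  | Sum.inr (Sum.inr (Sum.inr a)) => a

/-- The Yang–Mills jet algebra. -/
abbrev RYM (r : ℕ) : Type := MvPolynomial (YMIdx r × MIdx) ℝ

/-- The Minkowski signs `η^0 = 1`, `η^1 = η^2 = η^3 = -1`. -/
noncomputable def η : Fin 4 → ℝ := fun μ => if μ = 0 then 1 else -1

/-- The `μ`-th unit multi-index. -/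
noncomputable def e (μ : Fin 4) : MIdx := Finsupp.single μ 1

/-- The Yang–Mills BRST derivation: the unique `ℝ`-derivation of `RYM` with
`d (X (A^μ_a, γ)) = η^μ • X (u_a, γ + e_μ)`, `d (X (u_a, γ)) = 0`,
`d (X (ũ_a, γ)) = -(∑ μ, X (A^μ_a, γ + e_μ) + m a • X (Φ_a, γ))` and
`d (X (Φ_a, γ)) = m a • X (u_a, γ)`. -/
noncomputable def brst (r : ℕ) (m : Fin r → ℝ) : Derivation ℝ (RYM r) (RYM r) :=
  MvPolynomial.mkDerivation ℝ fun p =>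
    match p with
    | (Sum.inl (a, μ), γ) => η μ • (X (Sum.inr (Sum.inl a), γ + e μ) : RYM r)
    | (Sum.inr (Sum.inl _), _) => 0
    | (Sum.inr (Sum.inr (Sum.inl a)), γ) =>
        -((∑ μ, (X (Sum.inl (a, μ), γ + e μ) : RYM r))
          + m a • (X (Sum.inr (Sum.inr (Sum.inr a)), γ) : RYM r))
    | (Sum.inr (Sum.inr (Sum.inr a)), γ) => m a • (X (Sum.inr (Sum.inl a), γ) : RYM r)

/-- The Klein–Gordon generator `κ_{(f,γ)}` of the equations of motion. -/
noncomputable def kg (r : ℕ) (m : Fin r → ℝ) (f : YMIdx r) (γ : MIdx) : RYM r :=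
  (X (f, γ + Finsupp.single 0 2) : RYM r)
    - (∑ i ∈ ({1, 2, 3} : Finset (Fin 4)), (X (f, γ + Finsupp.single i 2) : RYM r))
    + (m (colour f)) ^ 2 • (X (f, γ) : RYM r)

/-- The Klein–Gordon ideal `I_KG`. -/
noncomputable def IKG (r : ℕ) (m : Fin r → ℝ) : Ideal (RYM r) :=
  Ideal.span {p : RYM r | ∃ f γ, p = kg r m f γ}

/-! Total derivatives commute with `d`, and the generators of `I_KG` are the images
`κ_{(f,γ)} = (□ + m_a²) X_{(f,γ)}` of the jet variables under the Klein–Gordon operator. Hence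
`d κ_{(f,γ)} = (□ + m_a²) (d X_{(f,γ)})`, and this lies in `I_KG` because `d X_{(f,γ)}` is a linear
combination of jet variables of the same colour `a`. On jet variables `d²` vanishes except at the
antighosts, where the divergence of `A` and the mass term combine to `-(□ + m_a²) u_a`. -/

theorem derivation_apply_mem_span {R A : Type*} [CommSemiring R] [CommSemiring A] [Algebra R A]
    (D : Derivation R A A) {s : Set A} (hs : ∀ x ∈ s, D x ∈ Ideal.span s) {x : A}
    (hx : x ∈ Ideal.span s) : D x ∈ Ideal.span s := by
  induction hx using Submodule.span_induction with
  | mem x hx => exact hs x hx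
  | zero => simp only [map_zero, zero_mem]
  | add x y _ _ hDx hDy => simpa only [map_add] using add_mem hDx hDy
  | smul c x hx hDx =>
    simp only [smul_eq_mul, Derivation.leibniz]
    exact add_mem (Ideal.mul_mem_left _ c hDx) (Ideal.mul_mem_right _ _ hx)

theorem add_e_add_e (γ : MIdx) (μ : Fin 4) : γ + e μ + e μ = γ + Finsupp.single μ 2 := by
  rw [add_assoc, e, ← Finsupp.single_add]

section KleinGordonOperator

variable {ι : Type*}

/-- The total derivative `∂_μ` on the jet algebra of fields indexed by `ι`. -/
noncomputable def totalDeriv (μ : Fin 4) :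
    Derivation ℝ (MvPolynomial (ι × MIdx) ℝ) (MvPolynomial (ι × MIdx) ℝ) :=
  mkDerivation ℝ fun p => X (p.1, p.2 + e μ)

/-- The Klein–Gordon operator `□ + M²` of mass `M`, where `□ = ∑ μ, η^μ ∂_μ²`, as a linear
operator on the jet algebra of fields indexed by `ι`. -/
noncomputable def kleinGordonOp (M : ℝ) :
    MvPolynomial (ι × MIdx) ℝ →ₗ[ℝ] MvPolynomial (ι × MIdx) ℝ :=
  ∑ μ, η μ • ((totalDeriv μ).toLinearMap ∘ₗ (totalDeriv μ).toLinearMap) + M ^ 2 • LinearMap.id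

theorem totalDeriv_X (μ : Fin 4) (f : ι) (γ : MIdx) :
    totalDeriv μ (X (f, γ)) = X (f, γ + e μ) :=
  mkDerivation_X _ _ _

theorem kleinGordonOp_apply (M : ℝ) (p : MvPolynomial (ι × MIdx) ℝ) :
    kleinGordonOp M p = ∑ μ, η μ • totalDeriv μ (totalDeriv μ p) + M ^ 2 • p := by
  simp [kleinGordonOp]

theorem kleinGordonOp_X (M : ℝ) (f : ι) (γ : MIdx) :
    kleinGordonOp M (X (f, γ)) =
      ∑ μ, η μ • X (f, γ + Finsupp.single μ 2) + M ^ 2 • X (f, γ) := by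
  simp only [kleinGordonOp_apply, totalDeriv_X, add_e_add_e]

end KleinGordonOperator

section BRST

variable {r : ℕ} {m : Fin r → ℝ}

/-- The vector field `A^μ_a`. -/
abbrev vector (a : Fin r) (μ : Fin 4) : YMIdx r := Sum.inl (a, μ)

/-- The ghost `u_a`. -/
abbrev ghost (a : Fin r) : YMIdx r := Sum.inr (Sum.inl a)

/-- The antighost `ũ_a`. -/
abbrev antighost (a : Fin r) : YMIdx r := Sum.inr (Sum.inr (Sum.inl a))

/-- The scalar `Φ_a`. -/
abbrev scalar (a : Fin r) : YMIdx r := Sum.inr (Sum.inr (Sum.inr a))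

theorem brst_vector (a : Fin r) (μ : Fin 4) (γ : MIdx) :
    brst r m (X (vector a μ, γ)) = η μ • X (ghost a, γ + e μ) :=
  mkDerivation_X _ _ _

theorem brst_ghost (a : Fin r) (γ : MIdx) : brst r m (X (ghost a, γ)) = 0 :=
  mkDerivation_X _ _ _

theorem brst_antighost (a : Fin r) (γ : MIdx) :
    brst r m (X (antighost a, γ)) =
      -(∑ μ, X (vector a μ, γ + e μ) + m a • X (scalar a, γ)) :=
  mkDerivation_X _ _ _

theorem brst_scalar (a : Fin r) (γ : MIdx) :
    brst r m (X (scalar a, γ)) = m a • X (ghost a, γ) :=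
  mkDerivation_X _ _ _

theorem kg_mem_IKG (f : YMIdx r) (γ : MIdx) : kg r m f γ ∈ IKG r m :=
  Ideal.subset_span ⟨f, γ, rfl⟩

theorem kleinGordonOp_X_eq_kg (f : YMIdx r) (γ : MIdx) :
    kleinGordonOp (m (colour f)) (X (f, γ)) = kg r m f γ := by
  have sum_spatial (x : Fin 4 → RYM r) : ∑ i ∈ {1, 2, 3}, x i = x 1 + x 2 + x 3 := by
    rw [Finset.sum_insert (by decide), Finset.sum_pair (by decide), add_assoc]
  rw [kleinGordonOp_X, kg, sum_spatial]
  simp only [Fin.sum_univ_four, η, ite_smul, one_smul, neg_smul, ↓reduceIte, one_ne_zero,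
    Fin.reduceEq, add_left_inj]
  abel

theorem commutator_brst_totalDeriv (μ : Fin 4) : ⁅brst r m, totalDeriv (ι := YMIdx r) μ⁆ = 0 := by
  refine derivation_ext fun ⟨f, γ⟩ => ?_
  rw [Derivation.commutator_apply, Derivation.zero_apply, sub_eq_zero, totalDeriv_X]
  rcases f with ⟨a, ν⟩ | a | a | a
  · simp only [brst_vector, Derivation.map_smul, totalDeriv_X, add_right_comm]
  · simp only [brst_ghost, map_zero]
  · simp only [brst_antighost, map_neg, map_add, map_sum, Derivation.map_smul, totalDeriv_X,
      add_right_comm γ]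
  · simp only [brst_scalar, Derivation.map_smul, totalDeriv_X]

theorem brst_totalDeriv (μ : Fin 4) (p : RYM r) :
    brst r m (totalDeriv μ p) = totalDeriv μ (brst r m p) := by
  rw [← sub_eq_zero, ← Derivation.commutator_apply, commutator_brst_totalDeriv,
    Derivation.zero_apply]

theorem brst_kleinGordonOp (M : ℝ) (p : RYM r) :
    brst r m (kleinGordonOp M p) = kleinGordonOp M (brst r m p) := by
  simp only [kleinGordonOp_apply, map_add, map_sum, Derivation.map_smul, brst_totalDeriv]

/-- The space of linear expressions in the jets of the fields of colour `a`. -/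
noncomputable def linearJets (a : Fin r) : Submodule ℝ (RYM r) :=
  Submodule.span ℝ {p | ∃ f γ, colour f = a ∧ p = X (f, γ)}

theorem X_mem_linearJets (f : YMIdx r) (γ : MIdx) : X (f, γ) ∈ linearJets (colour f) :=
  Submodule.subset_span ⟨f, γ, rfl, rfl⟩

theorem brst_X_mem_linearJets (f : YMIdx r) (γ : MIdx) :
    brst r m (X (f, γ)) ∈ linearJets (colour f) := by
  rcases f with ⟨a, μ⟩ | a | a | a
  · rw [brst_vector]
    exact Submodule.smul_mem _ _ (X_mem_linearJets (ghost a) _)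
  · rw [brst_ghost]
    exact zero_mem _
  · rw [brst_antighost]
    exact neg_mem (add_mem (sum_mem fun μ _ => X_mem_linearJets (vector a μ) _)
      (Submodule.smul_mem _ _ (X_mem_linearJets (scalar a) _)))
  · rw [brst_scalar]
    exact Submodule.smul_mem _ _ (X_mem_linearJets (ghost a) _)

theorem kleinGordonOp_mem_IKG {a : Fin r} {p : RYM r} (hp : p ∈ linearJets a) :
    kleinGordonOp (m a) p ∈ IKG r m := by
  suffices linearJets a ≤ ((IKG r m).restrictScalars ℝ).comap (kleinGordonOp (m a)) from this hp
  refine Submodule.span_le.mpr ?_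
  rintro _ ⟨f, γ, rfl, rfl⟩
  change kleinGordonOp (m (colour f)) (X (f, γ)) ∈ IKG r m
  rw [kleinGordonOp_X_eq_kg]
  exact kg_mem_IKG f γ

theorem brst_kg_mem_IKG (f : YMIdx r) (γ : MIdx) : brst r m (kg r m f γ) ∈ IKG r m := by
  rw [← kleinGordonOp_X_eq_kg, brst_kleinGordonOp]
  exact kleinGordonOp_mem_IKG (brst_X_mem_linearJets f γ)

theorem brst_mem_IKG {p : RYM r} (hp : p ∈ IKG r m) : brst r m p ∈ IKG r m := by
  refine derivation_apply_mem_span (brst r m) ?_ hp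
  rintro _ ⟨f, γ, rfl⟩
  exact brst_kg_mem_IKG f γ

theorem brst_brst_antighost (a : Fin r) (γ : MIdx) :
    brst r m (brst r m (X (antighost a, γ))) = -kg r m (ghost a) γ :=
  calc brst r m (brst r m (X (antighost a, γ)))
    _ = -(∑ μ, brst r m (X (vector a μ, γ + e μ)) + m a • brst r m (X (scalar a, γ))) := by
      simp only [brst_antighost, map_neg, map_add, map_sum, Derivation.map_smul]
    _ = -(∑ μ, η μ • X (ghost a, γ + Finsupp.single μ 2) + m a ^ 2 • X (ghost a, γ)) := by
      simp only [brst_vector, brst_scalar, add_e_add_e, smul_smul, pow_two]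
    _ = -kleinGordonOp (m a) (X (ghost a, γ)) := by rw [kleinGordonOp_X]
    _ = -kg r m (ghost a) γ := congrArg Neg.neg (kleinGordonOp_X_eq_kg (ghost a) γ)

theorem brst_brst_X_mem_IKG (f : YMIdx r) (γ : MIdx) :
    brst r m (brst r m (X (f, γ))) ∈ IKG r m := by
  rcases f with ⟨a, μ⟩ | a | a | a
  · simp only [brst_vector, brst_ghost, Derivation.map_smul, smul_zero, zero_mem]
  · simp only [brst_ghost, map_zero, zero_mem]
  · rw [brst_brst_antighost]
    exact neg_mem (kg_mem_IKG _ _)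
  · simp only [brst_scalar, brst_ghost, Derivation.map_smul, smul_zero, zero_mem]

end BRST

/-- On-shell nilpotency of the Yang–Mills BRST operator: `d` maps `I_KG` into itself and
`d (d (X (f, γ))) ∈ I_KG` for every field index `f` and multi-index `γ`. -/
theorem brst_onshell_nilpotent (r : ℕ) (m : Fin r → ℝ) :
    (∀ x ∈ IKG r m, brst r m x ∈ IKG r m) ∧
    ∀ (f : YMIdx r) (γ : MIdx), brst r m (brst r m (X (f, γ))) ∈ IKG r m :=
  ⟨fun _ => brst_mem_IKG, brst_brst_X_mem_IKG⟩
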